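/- Fix constants m > 0, ρ > 0, α > 0, and β ≥ 0, define φ : [0, ∞) → ℝ by φ(v) = α(√(2v/m) + ρ)² + β, suppose there exists ε > 0 with φ(ε) ≤ ε, and let v̄ be the unique positive fixed point of φ. Let (xₙ)_{n≥1} be a sequence of nonnegative reals such that for some index N, xₙ ≤ φ(x_{n−1}) for all n ≥ N. Then limsup_{n→∞} xₙ ≤ v̄ ≤ ε. -/

import Mathlib

open Filter

/-!
A concave function `f` that lies above the diagonal at `a` has slope less than one between `a` and a
fixed point `p > a`. By concavity this slope bounds all later ones, so `f` contracts distances to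
the right of `p`, while monotonicity keeps the values to the left of `p` below `p`. The excess
`(xₙ - p)⁺` of a sequence with `xₙ₊₁ ≤ f xₙ` therefore decays geometrically. For the map `φ`,
concavity is visible after expanding the square: for `v ≥ 0` it is affine in `v` and `√v`, with a
nonnegative coefficient at `√v`.
-/

section Concave

variable {𝕜 : Type*} [Field 𝕜] [LinearOrder 𝕜] [IsStrictOrderedRing 𝕜]
  {s : Set 𝕜} {f : 𝕜 → 𝕜} {a p v : 𝕜}

theorem slope_lt_one_of_lt_map_of_map_le (hap : a < p) (hfa : a < f a) (hfp : f p ≤ p) :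
    slope f a p < 1 := by
  rw [slope_def_field, div_lt_one (sub_pos.2 hap)]
  linarith

theorem map_lt_self_of_concaveOn (hf : ConcaveOn 𝕜 s f) (ha : a ∈ s) (hv : v ∈ s)
    (hap : a < p) (hpv : p < v) (hfa : a < f a) (hfp : f p ≤ p) : f v < v := by
  have slope_lt_one : (f v - f p) / (v - p) < 1 :=
    (hf.slope_anti_adjacent ha hv hap hpv).trans_lt <| by
      simpa only [slope_def_field] using slope_lt_one_of_lt_map_of_map_le hap hfa hfp
  rw [div_lt_one (sub_pos.2 hpv)] at slope_lt_one
  linarith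

theorem posPart_map_sub_le_slope_mul_posPart_sub (hf : ConcaveOn 𝕜 s f) (hmono : MonotoneOn f s)
    (ha : a ∈ s) (hp : p ∈ s) (hv : v ∈ s) (hap : a < p) :
    (f v - f p)⁺ ≤ slope f a p * (v - p)⁺ := by
  rcases le_or_gt v p with hvp | hpv
  · rw [posPart_eq_zero.2 (sub_nonpos.2 (hmono hv hp hvp)), posPart_eq_zero.2 (sub_nonpos.2 hvp),
      mul_zero]
  · rw [posPart_eq_self.2 (sub_nonneg.2 (hmono hp hv hpv.le)),
      posPart_eq_self.2 (sub_nonneg.2 hpv.le), slope_def_field, ← div_le_iff₀ (sub_pos.2 hpv)]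
    exact hf.slope_anti_adjacent ha hv hap hpv

end Concave

theorem limsup_le_of_tendsto_posPart_sub {ι : Type*} {l : Filter ι} [l.NeBot] {x : ι → ℝ} {p : ℝ}
    (hx : IsCoboundedUnder (· ≤ ·) l x) (hlim : Tendsto (fun i ↦ (x i - p)⁺) l (nhds 0)) :
    limsup x l ≤ p := by
  have upper_tendsto : Tendsto (fun i ↦ p + (x i - p)⁺) l (nhds p) := by
    simpa only [add_zero] using hlim.const_add p
  calc limsup x l ≤ limsup (fun i ↦ p + (x i - p)⁺) l :=
        limsup_le_limsup (.of_forall fun i ↦ sub_le_iff_le_add'.1 (le_posPart (x i - p))) hx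
          upper_tendsto.isBoundedUnder_le
    _ = p := upper_tendsto.limsup_eq

theorem eventually_recursion_limsup_le_fixed_point_general {f : ℝ → ℝ} {a p ε : ℝ} {x : ℕ → ℝ}
    (hconc : ConcaveOn ℝ (Set.Ici a) f) (hmono : MonotoneOn f (Set.Ici a)) (hfa : a < f a)
    (haε : a < ε) (hfε : f ε ≤ ε) (hap : a < p) (hfp : f p = p)
    (hx : ∀ᶠ n in atTop, a ≤ x n) (hrec : ∀ᶠ n in atTop, x (n + 1) ≤ f (x n)) :
    limsup x atTop ≤ p ∧ p ≤ ε := by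
  constructor
  · have excess_contracts :
        ∀ᶠ n in atTop, ‖(x (n + 1) - p)⁺‖ ≤ slope f a p * ‖(x n - p)⁺‖ := by
      filter_upwards [hx, hrec] with n hn hstep
      simp only [Real.norm_of_nonneg (posPart_nonneg _)]
      calc (x (n + 1) - p)⁺ ≤ (f (x n) - f p)⁺ := posPart_mono (by linarith)
        _ ≤ slope f a p * (x n - p)⁺ :=
          posPart_map_sub_le_slope_mul_posPart_sub hconc hmono Set.self_mem_Ici hap.le hn hap
    have excess_tendsto : Tendsto (fun n ↦ (x n - p)⁺) atTop (nhds 0) :=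
      (summable_of_ratio_norm_eventually_le (slope_lt_one_of_lt_map_of_map_le hap hfa hfp.le)
        excess_contracts).tendsto_atTop_zero
    exact limsup_le_of_tendsto_posPart_sub (isBoundedUnder_of_eventually_ge hx).isCoboundedUnder_le
      excess_tendsto
  · by_contra! hεp
    exact (map_lt_self_of_concaveOn hconc Set.self_mem_Ici hap.le haε hεp hfa hfε).ne hfp

/-- The one-step map `φ` bounding the evolution of the mean gap, with strong convexity parameter `m`
and minimizer drift `ρ`. It is extended to negative `v` by `√(2v/m) = 0`. -/
noncomputable def meanGapMap (m ρ α β v : ℝ) : ℝ :=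
  α * (√(2 * v / m) + ρ) ^ 2 + β

section MeanGapMap

variable {m ρ α : ℝ}

theorem meanGapMap_monotone (hm : 0 < m) (hρ : 0 ≤ ρ) (hα : 0 ≤ α) (β : ℝ) :
    Monotone (meanGapMap m ρ α β) := by
  intro v w hvw
  unfold meanGapMap
  gcongr

theorem meanGapMap_eq_of_nonneg (hm : 0 < m) (ρ α β : ℝ) {v : ℝ} (hv : 0 ≤ v) :
    meanGapMap m ρ α β v = 2 * α / m * v + 2 * α * ρ * √(2 / m) * √v + (α * ρ ^ 2 + β) := by
  have sqrt_split : √(2 * v / m) = √(2 / m) * √v := by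
    rw [← Real.sqrt_mul (by positivity), div_mul_eq_mul_div]
  have sq_sqrt_ratio : √(2 / m) ^ 2 = 2 / m := Real.sq_sqrt (by positivity)
  rw [meanGapMap, sqrt_split]
  linear_combination α * √v ^ 2 * sq_sqrt_ratio + 2 * α / m * Real.sq_sqrt hv

theorem meanGapMap_concaveOn (hm : 0 < m) (hρ : 0 ≤ ρ) (hα : 0 ≤ α) (β : ℝ) :
    ConcaveOn ℝ (Set.Ici 0) (meanGapMap m ρ α β) := by
  have linear_part : ConcaveOn ℝ (Set.Ici 0) fun v : ℝ ↦ 2 * α / m * v :=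
    (concaveOn_id (convex_Ici 0)).smul (by positivity)
  have sqrt_part : ConcaveOn ℝ (Set.Ici 0) fun v : ℝ ↦ 2 * α * ρ * √(2 / m) * √v :=
    Real.strictConcaveOn_sqrt.concaveOn.smul (by positivity)
  exact ((linear_part.add sqrt_part).add_const (α * ρ ^ 2 + β)).congr
    fun v hv ↦ (meanGapMap_eq_of_nonneg hm ρ α β hv).symm

theorem meanGapMap_zero_pos (m : ℝ) {β : ℝ} (hρ : 0 < ρ) (hα : 0 < α) (hβ : 0 ≤ β) :
    0 < meanGapMap m ρ α β 0 := by
  unfold meanGapMap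
  positivity

end MeanGapMap

/-- **deterministic limsup bound.** For `φ(v) = α(√(2v/m) + ρ)² + β` with
`φ(ε) ≤ ε` for some `ε > 0` and unique positive fixed point `v̄`, any sequence of
nonnegative reals eventually satisfying `xₙ ≤ φ(x_{n−1})` has `limsup xₙ ≤ v̄ ≤ ε`. -/
theorem eventually_recursion_limsup_le_fixed_point
    (m ρ α β ε : ℝ) (hm : 0 < m) (hρ : 0 < ρ) (hα : 0 < α) (hβ : 0 ≤ β) (hε : 0 < ε)
    (φ : ℝ → ℝ)
    (hφ : ∀ v : ℝ, φ v = α * (Real.sqrt (2 * v / m) + ρ) ^ 2 + β)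
    (hfix : φ ε ≤ ε)
    (vbar : ℝ) (hvbar_pos : 0 < vbar) (hvbar_fix : φ vbar = vbar)
    (x : ℕ → ℝ) (hx : ∀ n, 0 ≤ x n)
    (hrec : ∃ N : ℕ, ∀ n : ℕ, N ≤ n → x (n + 1) ≤ φ (x n)) :
    limsup x atTop ≤ vbar ∧ vbar ≤ ε := by
  obtain rfl : φ = meanGapMap m ρ α β := funext hφ
  exact eventually_recursion_limsup_le_fixed_point_general
    (meanGapMap_concaveOn hm hρ.le hα.le β) ((meanGapMap_monotone hm hρ.le hα.le β).monotoneOn _)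
    (meanGapMap_zero_pos m hρ hα hβ) hε hfix hvbar_pos hvbar_fix (.of_forall hx)
    (eventually_atTop.2 hrec)
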